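/- arXiv:2502.13384 — 5 statements merged into one kernel-verified Lean document; each statement's English description precedes it below -/
import Mathlib

section
/- Let g : ℝ → ℝ be defined by g(b) = 4π² + 2b + b² − 2b·e^b. Then g has exactly one real root; that is, there exists a unique b₀ ∈ ℝ with 4π² + 2b₀ + b₀² − 2b₀·e^{b₀} = 0. -/
/-!
For `b ≤ 0` the function is at least `4π² - 1 + (b + 1)² > 0`, so every root is positive.
A root satisfies `b * (2e^b - 2 - b) = 4π²`, and on `b > 0` the left-hand side is a product of two
factors that are increasing, and positive at a root; hence there is at most one root.
A root exists between `0` and `4` by the intermediate value theorem.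
-/

open Real

theorem g_root_pos {b : ℝ} (h : 4 * π ^ 2 + 2 * b + b ^ 2 - 2 * b * Real.exp b = 0) : 0 < b := by
  by_contra! hb
  have h1 : 0 ≤ -b * Real.exp b := mul_nonneg (by linarith) (Real.exp_pos b).le
  nlinarith [Real.pi_gt_three, sq_nonneg (b + 1)]

theorem g_roots_not_lt {x y : ℝ} (hx : 4 * π ^ 2 + 2 * x + x ^ 2 - 2 * x * Real.exp x = 0)
    (hy : 4 * π ^ 2 + 2 * y + y ^ 2 - 2 * y * Real.exp y = 0) : ¬ x < y := by
  intro hxy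
  have px := g_root_pos hx
  have hmono : 2 * Real.exp x - 2 - x < 2 * Real.exp y - 2 - y := by
    have h1 : Real.exp y = Real.exp x * Real.exp (y - x) := by
      rw [← Real.exp_add]; congr 1; ring
    have h2 := Real.add_one_le_exp (y - x)
    have h3 : 1 < Real.exp x := Real.one_lt_exp_iff.mpr px
    rw [h1]
    nlinarith
  have hpos : 0 < 2 * Real.exp x - 2 - x := by
    have h4 : 0 < x * (2 * Real.exp x - 2 - x) := by nlinarith [Real.pi_gt_three]
    exact pos_of_mul_pos_right h4 px.le
  have := mul_lt_mul'' hxy hmono px.le hpos.le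
  linarith

/-- The function `g(b) = 4π² + 2b + b² − 2b·e^b` has exactly one real root. -/
theorem unique_real_root_of_g :
    ∃! b₀ : ℝ, 4 * π ^ 2 + 2 * b₀ + b₀ ^ 2 - 2 * b₀ * Real.exp b₀ = 0 := by
  have hc : ContinuousOn
      (fun b : ℝ => 4 * π ^ 2 + 2 * b + b ^ 2 - 2 * b * Real.exp b) (Set.Icc 0 4) := by fun_prop
  have he : (16 : ℝ) ≤ Real.exp 4 := by
    have h1 : (2 : ℝ) ≤ Real.exp 1 := by linarith [Real.add_one_le_exp 1]
    calc (16 : ℝ) = 2 ^ 4 := by norm_num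
      _ ≤ Real.exp 1 ^ 4 := by gcongr
      _ = Real.exp 4 := by rw [← Real.exp_nat_mul]; norm_num
  obtain ⟨b, -, hb⟩ := intermediate_value_Icc' (by norm_num) hc
    (show (0 : ℝ) ∈ Set.Icc _ _ from
      ⟨by nlinarith [Real.pi_le_four, Real.pi_pos], by norm_num; positivity⟩)
  refine ⟨b, hb, fun y hy => ?_⟩
  exact le_antisymm (not_lt.mp (g_roots_not_lt hb hy)) (not_lt.mp (g_roots_not_lt hy hb))
end

section
/- Let b₀ be the unique real root of g(b) = 4π² + 2b + b² − 2b·e^b. Then 2.3565 < b₀ < 2.3566. -/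
open Real

/-!
On `b ≤ 0` the function `g` is positive, since there `-2b·e^b ≥ 0` and
`4π² + 2b + b² = 4π² - 1 + (b + 1)²`. On `b ≥ 0` the equation `g b = 0` reads
`2b(e^b - 1) - b² = 4π²`, and the left side equals `2b(e^b - 1 - b) + b²`, which is
nondecreasing (`rootSide_mono`). So it suffices to compare the left side with `4π²` at the two
endpoints, for which `e^c` is estimated as `e² · e^(c - 2)`, the second factor by its Taylor
polynomial of degree 5.
-/

lemma rootSide_mono {b c : ℝ} (hb : 0 ≤ b) (hbc : b ≤ c) :
    2 * b * (exp b - 1) - b ^ 2 ≤ 2 * c * (exp c - 1) - c ^ 2 := by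
  have h1 : c - b + 1 ≤ exp (c - b) := add_one_le_exp _
  have h2 : 1 ≤ exp b := one_le_exp hb
  have h3 : exp c = exp b * exp (c - b) := by rw [← exp_add]; ring_nf
  have h4 : exp b - 1 - b ≤ exp c - 1 - c := by rw [h3]; nlinarith
  have h5 : 0 ≤ exp b - 1 - b := by linarith [add_one_le_exp b]
  nlinarith [mul_le_mul hbc h4 h5 (hb.trans hbc)]

lemma exp_left_lt : exp 2.3565 < 10.5546 := by
  have h : exp (2.3565 : ℝ) = exp 1 * exp 1 * exp 0.3565 := by
    rw [← exp_add, ← exp_add]; norm_num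
  have h1 := exp_one_lt_d9
  have h2 : exp (0.3565 : ℝ) < 1.42834 := by
    refine (exp_bound' (n := 6) (by norm_num) (by norm_num) (by norm_num)).trans_lt ?_
    norm_num [Finset.sum_range_succ, Nat.factorial]
  rw [h]
  calc exp 1 * exp 1 * exp 0.3565 < 2.7182818286 * 2.7182818286 * 1.42834 := by gcongr
    _ < 10.5546 := by norm_num

lemma lt_exp_right : 10.5548 < exp 2.3566 := by
  have h : exp (2.3566 : ℝ) = exp 1 * exp 1 * exp 0.3566 := by
    rw [← exp_add, ← exp_add]; norm_num
  have h1 := exp_one_gt_d9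
  have h2 : 1.42846 < exp (0.3566 : ℝ) := by
    refine lt_of_lt_of_le ?_ (sum_le_exp_of_nonneg (by norm_num) 6)
    norm_num [Finset.sum_range_succ, Nat.factorial]
  rw [h]
  calc (10.5548 : ℝ) < 2.7182818283 * 2.7182818283 * 1.42846 := by norm_num
    _ < exp 1 * exp 1 * exp 0.3566 := by gcongr

/-- If `b₀` is the (unique) real root of `g(b) = 4π² + 2b + b² − 2b·e^b`,
then `2.3565 < b₀ < 2.3566`. -/
theorem real_root_of_g_bounds (b₀ : ℝ)
    (hroot : 4 * π ^ 2 + 2 * b₀ + b₀ ^ 2 - 2 * b₀ * Real.exp b₀ = 0) :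
    2.3565 < b₀ ∧ b₀ < 2.3566 := by
  have hπ1 : 3.141592 ^ 2 < π ^ 2 := by gcongr; exact pi_gt_d6
  have hπ2 : π ^ 2 < 3.141593 ^ 2 := by gcongr; exact pi_lt_d6
  have hpos : 0 < b₀ := by
    by_contra! hb
    nlinarith [mul_nonneg (neg_nonneg.2 hb) (exp_pos b₀).le, sq_nonneg (b₀ + 1)]
  constructor
  · by_contra! hb
    have := rootSide_mono hpos.le hb
    have := exp_left_lt
    norm_num at *
    linarith
  · by_contra! hb
    have := rootSide_mono (by norm_num) hb
    have := lt_exp_right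
    norm_num at *
    linarith
end

section
/- Fix b ∈ ℝ and for each integer n ≥ 3 let F_n(x) = −2cos(2π/n) + 2x + n·x^{n−1} + 2cos(2π/n)(1−n)·x^n − (2−n)·x^{n+1}. Then lim_{n→∞} n·F_n(1 − b/n) = e^{−b}·(4π² + 2b + b² − 2b·e^b). -/
/-!
Write `x = 1 - b / n`, `P = x ^ (n - 1)` and `d = n² (1 - cos (2π / n))`. Collecting powers of `x`,
`n · F_n(x) = 2 d / n - 2 b + P (b² + 2 b x + 2 d (1 - 1 / n) x)` exactly (`nF_eq`), so no error
terms have to be controlled: it remains to let `x → 1`, `P → e^{-b}`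
(`tendsto_one_sub_div_pow_pred`) and `d → 2π²` (`tendsto_sq_mul_one_sub_cos`).
-/

open Real Filter

/-- `F_n(x) = −2cos(2π/n) + 2x + n·x^{n−1} + 2cos(2π/n)(1−n)·x^n − (2−n)·x^{n+1}` on `ℝ`. -/
noncomputable def F (n : ℕ) (x : ℝ) : ℝ :=
  -2 * Real.cos (2 * π / n) + 2 * x + (n : ℝ) * x ^ (n - 1)
    + 2 * Real.cos (2 * π / n) * (1 - (n : ℝ)) * x ^ n
    - (2 - (n : ℝ)) * x ^ (n + 1)

/-- The half-angle formula gives `n² (1 - cos (2π / n)) = 2π² sinc(π / n)²`, and `sinc` is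
continuous with value `1` at `0`. -/
lemma tendsto_sq_mul_one_sub_cos :
    Tendsto (fun n : ℕ => (n : ℝ) ^ 2 * (1 - Real.cos (2 * π / n))) atTop (nhds (2 * π ^ 2)) := by
  have h0 : Tendsto (fun n : ℕ => π / (n : ℝ)) atTop (nhds 0) :=
    tendsto_const_div_atTop_nhds_zero_nat π
  have h1 : Tendsto (fun n : ℕ => Real.sinc (π / (n : ℝ))) atTop (nhds 1) := by
    simpa [Function.comp_def] using (Real.continuous_sinc.tendsto 0).comp h0
  have h2 := (h1.pow 2).const_mul (2 * π ^ 2)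
  rw [one_pow, mul_one] at h2
  refine h2.congr' ?_
  filter_upwards [eventually_ge_atTop 1] with n hn
  have hn0 : (n : ℝ) ≠ 0 := by positivity
  have hpi : π / (n : ℝ) ≠ 0 := div_ne_zero Real.pi_ne_zero hn0
  rw [Real.sinc_of_ne_zero hpi, mul_div_assoc, Real.cos_two_mul, Real.cos_sq']
  have := Real.pi_ne_zero
  field_simp
  ring

lemma tendsto_one_sub_div (b : ℝ) :
    Tendsto (fun n : ℕ => 1 - b / (n : ℝ)) atTop (nhds 1) := by
  simpa using (tendsto_const_div_atTop_nhds_zero_nat b).const_sub 1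

lemma tendsto_one_sub_div_pow_pred (b : ℝ) :
    Tendsto (fun n : ℕ => (1 - b / (n : ℝ)) ^ (n - 1)) atTop (nhds (Real.exp (-b))) := by
  have h1 : Tendsto (fun n : ℕ => (1 - b / (n : ℝ)) ^ n) atTop (nhds (Real.exp (-b))) := by
    simpa [neg_div, ← sub_eq_add_neg] using Real.tendsto_one_add_div_pow_exp (-b)
  have h2 := h1.div (tendsto_one_sub_div b) one_ne_zero
  rw [div_one] at h2
  refine h2.congr' ?_
  filter_upwards [eventually_ge_atTop 1, (tendsto_one_sub_div b).eventually_ne one_ne_zero]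
    with n hn hx
  obtain ⟨m, rfl⟩ := Nat.exists_eq_add_of_le' hn
  simp only [Pi.div_apply, Nat.add_sub_cancel]
  rw [pow_succ, mul_div_cancel_right₀ _ hx]

/-- The exact rewriting of `n · F_n(1 - b / n)` in which every factor converges. -/
lemma nF_eq (b : ℝ) {n : ℕ} (hn : 1 ≤ n) :
    (n : ℝ) * F n (1 - b / n) =
      2 * ((n : ℝ) ^ 2 * (1 - Real.cos (2 * π / n))) * (1 / (n : ℝ)) - 2 * b
        + (1 - b / (n : ℝ)) ^ (n - 1) * (b ^ 2 + 2 * b * (1 - b / (n : ℝ))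
          + 2 * ((n : ℝ) ^ 2 * (1 - Real.cos (2 * π / n))) * (1 - 1 / (n : ℝ))
            * (1 - b / (n : ℝ))) := by
  have hn0 : (n : ℝ) ≠ 0 := by positivity
  have e1 : (1 - b / (n : ℝ)) ^ n = (1 - b / (n : ℝ)) ^ (n - 1) * (1 - b / (n : ℝ)) := by
    rw [← pow_succ, Nat.sub_add_cancel hn]
  unfold F
  rw [pow_succ _ n, e1]
  -- The power and the cosine are atoms for the remaining rational identity.
  generalize (1 - b / (n : ℝ)) ^ (n - 1) = P
  generalize Real.cos (2 * π / n) = c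
  field_simp
  ring

/-- For fixed `b ∈ ℝ`, `n·F_n(1 − b/n) → e^{−b}·(4π² + 2b + b² − 2b·e^b)` as `n → ∞`. -/
theorem nF_tendsto (b : ℝ) :
    Tendsto (fun n : ℕ => (n : ℝ) * F n (1 - b / n)) atTop
      (nhds (Real.exp (-b) * (4 * π ^ 2 + 2 * b + b ^ 2 - 2 * b * Real.exp b))) := by
  have hx := tendsto_one_sub_div b
  have hd := tendsto_sq_mul_one_sub_cos.const_mul 2
  have hi : Tendsto (fun n : ℕ => 1 / (n : ℝ)) atTop (nhds 0) :=
    tendsto_const_div_atTop_nhds_zero_nat 1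
  have key := ((hd.mul hi).sub_const (2 * b)).add ((tendsto_one_sub_div_pow_pred b).mul
    (((hx.const_mul (2 * b)).const_add (b ^ 2)).add ((hd.mul (hi.const_sub 1)).mul hx)))
  have hlim : Real.exp (-b) * (4 * π ^ 2 + 2 * b + b ^ 2 - 2 * b * Real.exp b) =
      2 * (2 * π ^ 2) * 0 - 2 * b
        + Real.exp (-b) * (b ^ 2 + 2 * b * 1 + 2 * (2 * π ^ 2) * (1 - 0) * 1) := by
    have he : Real.exp (-b) * Real.exp b = 1 := by rw [← Real.exp_add]; simp
    linear_combination (-2 * b) * he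
  rw [hlim]
  refine key.congr' ?_
  filter_upwards [eventually_ge_atTop 1] with n hn
  exact (nF_eq b hn).symm
end

section
/- Fix b ∈ ℝ and for each integer n ≥ 3 let F_n(x) = −2cos(2π/n) + 2x + n·x^{n−1} + 2cos(2π/n)(1−n)·x^n − (2−n)·x^{n+1}. Then lim_{n→∞} n²·( F_n(1 − b/n) − e^{−b}(4π² + 2b + b² − 2b·e^b)/n ) = e^{−b}·(−b⁴ − 8π² − 4b²π² + 8e^b·π²)/2. -/
/-!
Write `h = 1/n`, `x = 1 - b h`, `E = x ^ n` and `K = n² (1 - cos (2π/n))`. The coefficients of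
`x ^ (n-1)`, `x ^ n`, `x ^ (n+1)` in `F n x` with the cosine replaced by `1` combine to
`x ^ (n-1) (1 - x) (n - (n-2) x)`, which removes the cancellation of leading terms: for `x ≠ 0`
the quantity in the theorem equals

`2K + b(2+b) · n(E - e⁻ᵇ) + b³ E / x + 2 n(K - 2π²) E + 4π² · n(E - e⁻ᵇ) - 2 K E`.

It then suffices to know `n(E - e⁻ᵇ) → -(b²/2) e⁻ᵇ` (second-order expansion of the logarithm,
`tendsto_mul_pow_sub_exp`) and `n(K - 2π²) → 0` (fourth-order bound on the cosine,
`tendsto_mul_cos_remainder`).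
-/

open Real Filter

theorem tendsto_sq_mul_log (b : ℝ) :
    Tendsto (fun n : ℕ => (n : ℝ) * ((n : ℝ) * Real.log (1 - b / n) + b)) atTop
      (nhds (-b ^ 2 / 2)) := by
  have hx : Tendsto (fun n : ℕ => b / (n : ℝ)) atTop (nhds 0) :=
    tendsto_const_div_atTop_nhds_zero_nat b
  have hx' : Tendsto (fun n : ℕ => |b / (n : ℝ)|) atTop (nhds 0) := by simpa using hx.abs
  have hB : Tendsto (fun n : ℕ => b ^ 2 * |b / (n : ℝ)| / (1 - |b / (n : ℝ)|)) atTop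
      (nhds 0) := by
    have := (hx'.const_mul (b ^ 2)).div (hx'.const_sub 1) (by norm_num)
    simpa [Pi.div_def] using this
  rw [tendsto_iff_norm_sub_tendsto_zero]
  refine squeeze_zero' (Eventually.of_forall fun _ => norm_nonneg _) ?_ hB
  filter_upwards [hx'.eventually_lt_const one_pos, eventually_gt_atTop 0] with n hn hn0
  have hn0' : (n : ℝ) ≠ 0 := by positivity
  have key := Real.abs_log_sub_add_sum_range_le hn 2
  simp only [Finset.sum_range_succ, Finset.sum_range_zero] at key
  norm_num at key
  rw [Real.norm_eq_abs]
  have e1 : (n : ℝ) * ((n : ℝ) * Real.log (1 - b / n) + b) - -b ^ 2 / 2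
      = (n : ℝ) ^ 2 * (b / n + (b / n) ^ 2 / 2 + Real.log (1 - b / n)) := by
    field_simp
    ring
  have e2 : b ^ 2 * |b / (n : ℝ)| / (1 - |b / (n : ℝ)|)
      = (n : ℝ) ^ 2 * (|b / (n : ℝ)| ^ 3 / (1 - |b / (n : ℝ)|)) := by
    have : |b / (n : ℝ)| ^ 3 = |b / (n : ℝ)| * (b / n) ^ 2 := by rw [← sq_abs (b / n)]; ring
    rw [this]
    field_simp
  rw [e1, e2, abs_mul, abs_of_nonneg (by positivity : (0 : ℝ) ≤ (n : ℝ) ^ 2)]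
  refine mul_le_mul_of_nonneg_left ?_ (by positivity)
  simpa [abs_div] using key

/-- The first-order correction in `(1 - b/n) ^ n → e⁻ᵇ`. -/
theorem tendsto_mul_pow_sub_exp (b : ℝ) :
    Tendsto (fun n : ℕ => (n : ℝ) * ((1 - b / n) ^ n - Real.exp (-b))) atTop
      (nhds (-b ^ 2 / 2 * Real.exp (-b))) := by
  have hL := tendsto_sq_mul_log b
  have hu : Tendsto (fun n : ℕ => (n : ℝ) * Real.log (1 - b / n) + b) atTop (nhds 0) := by
    have := hL.mul (tendsto_inv_atTop_nhds_zero_nat (𝕜 := ℝ))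
    rw [mul_zero] at this
    refine this.congr' ?_
    filter_upwards [eventually_gt_atTop 0] with n hn0
    have hn0' : (n : ℝ) ≠ 0 := by positivity
    field_simp
  -- With `u = n log (1 - b/n) + b`, `|n (eᵘ - 1 - u)| ≤ |(n u) u|`, which tends to zero.
  have hR : Tendsto (fun n : ℕ => (n : ℝ) * (Real.exp ((n : ℝ) * Real.log (1 - b / n) + b) - 1
      - ((n : ℝ) * Real.log (1 - b / n) + b))) atTop (nhds 0) := by
    have hB := (hL.mul hu).abs
    rw [mul_zero, abs_zero] at hB
    have hu' := hu.abs
    rw [abs_zero] at hu'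
    refine squeeze_zero_norm' ?_ hB
    filter_upwards [hu'.eventually_lt_const one_pos] with n hn
    rw [Real.norm_eq_abs, abs_mul, mul_assoc, abs_mul, ← sq, abs_sq]
    exact mul_le_mul_of_nonneg_left (Real.abs_exp_sub_one_sub_id_le hn.le) (abs_nonneg _)
  have hS := (hR.add hL).mul_const (Real.exp (-b))
  rw [zero_add] at hS
  refine hS.congr' ?_
  have hx : Tendsto (fun n : ℕ => b / (n : ℝ)) atTop (nhds 0) :=
    tendsto_const_div_atTop_nhds_zero_nat b
  filter_upwards [hx.eventually_lt_const one_pos] with n hn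
  have hpow : (1 - b / n : ℝ) ^ n
      = Real.exp ((n : ℝ) * Real.log (1 - b / n) + b) * Real.exp (-b) := by
    rw [← Real.exp_add, add_neg_cancel_right, Real.exp_nat_mul, Real.exp_log (by linarith)]
  rw [hpow]
  ring

theorem tendsto_mul_cos_remainder :
    Tendsto (fun n : ℕ => (n : ℝ) * ((n : ℝ) ^ 2 * (1 - Real.cos (2 * π / n)) - 2 * π ^ 2))
      atTop (nhds 0) := by
  have hx : Tendsto (fun n : ℕ => 2 * π / (n : ℝ)) atTop (nhds 0) :=
    tendsto_const_div_atTop_nhds_zero_nat _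
  have hB := hx.const_mul ((2 * π) ^ 3 * (5 / 96))
  rw [mul_zero] at hB
  refine squeeze_zero_norm' ?_ hB
  filter_upwards [hx.eventually_lt_const one_pos, eventually_gt_atTop 0] with n hn hn0
  have hn0' : (n : ℝ) ≠ 0 := by positivity
  have hpos : 0 ≤ 2 * π / (n : ℝ) := by positivity
  have key := Real.cos_bound (x := 2 * π / n) (by rw [abs_of_nonneg hpos]; exact hn.le)
  rw [abs_of_nonneg hpos] at key
  have e1 : (n : ℝ) * ((n : ℝ) ^ 2 * (1 - Real.cos (2 * π / n)) - 2 * π ^ 2)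
      = -((n : ℝ) ^ 3 * (Real.cos (2 * π / n) - (1 - (2 * π / n) ^ 2 / 2))) := by
    field_simp
    ring
  have e2 : (2 * π) ^ 3 * (5 / 96) * (2 * π / (n : ℝ))
      = (n : ℝ) ^ 3 * ((2 * π / n) ^ 4 * (5 / 96)) := by
    field_simp
  rw [Real.norm_eq_abs, e1, e2, abs_neg, abs_mul,
    abs_of_nonneg (by positivity : (0 : ℝ) ≤ (n : ℝ) ^ 3)]
  exact mul_le_mul_of_nonneg_left key (by positivity)

/-- Second-order asymptotics: for fixed `b ∈ ℝ`,
`n²·(F_n(1 − b/n) − e^{−b}(4π² + 2b + b² − 2b·e^b)/n)`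
converges to `e^{−b}·(−b⁴ − 8π² − 4b²π² + 8e^b·π²)/2` as `n → ∞`. -/
theorem nsqF_tendsto (b : ℝ) :
    Tendsto (fun n : ℕ => (n : ℝ) ^ 2 *
        (F n (1 - b / n) -
          Real.exp (-b) * (4 * π ^ 2 + 2 * b + b ^ 2 - 2 * b * Real.exp b) / n)) atTop
      (nhds (Real.exp (-b) *
        (-b ^ 4 - 8 * π ^ 2 - 4 * b ^ 2 * π ^ 2 + 8 * Real.exp b * π ^ 2) / 2)) := by
  have hinv := tendsto_inv_atTop_nhds_zero_nat (𝕜 := ℝ)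
  have hD := tendsto_mul_pow_sub_exp b
  have hK' := tendsto_mul_cos_remainder
  have hx : Tendsto (fun n : ℕ => 1 - b / (n : ℝ)) atTop (nhds 1) := by
    simpa using (tendsto_const_div_atTop_nhds_zero_nat b).const_sub 1
  have hE : Tendsto (fun n : ℕ => (1 - b / (n : ℝ)) ^ n) atTop (nhds (Real.exp (-b))) := by
    have := (hinv.mul hD).add_const (Real.exp (-b))
    rw [zero_mul, zero_add] at this
    refine this.congr' ?_
    filter_upwards [eventually_gt_atTop 0] with n hn0
    have hn0' : (n : ℝ) ≠ 0 := by positivity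
    rw [inv_mul_cancel_left₀ hn0']
    ring
  have hK : Tendsto (fun n : ℕ => (n : ℝ) ^ 2 * (1 - Real.cos (2 * π / n))) atTop
      (nhds (2 * π ^ 2)) := by
    have := (hinv.mul hK').add_const (2 * π ^ 2)
    rw [zero_mul, zero_add] at this
    refine this.congr' ?_
    filter_upwards [eventually_gt_atTop 0] with n hn0
    have hn0' : (n : ℝ) ≠ 0 := by positivity
    rw [inv_mul_cancel_left₀ hn0']
    ring
  have hT := (((((hK.const_mul 2).add (hD.const_mul (b * (2 + b)))).add
    ((hE.const_mul (b ^ 3)).div hx one_ne_zero)).add ((hK'.const_mul 2).mul hE)).add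
    (hD.const_mul (4 * π ^ 2))).sub ((hK.const_mul 2).mul hE)
  have hexp : Real.exp (-b) * Real.exp b = 1 := by rw [← Real.exp_add]; simp
  convert hT.congr' ?_ using 2
  · linear_combination (4 * π ^ 2) * hexp
  · filter_upwards [hx.eventually_const_lt one_pos, eventually_gt_atTop 0] with n hxn hn0
    have hn0' : (n : ℝ) ≠ 0 := by positivity
    obtain ⟨m, rfl⟩ : ∃ m, n = m + 1 := ⟨n - 1, by omega⟩
    simp only [F, Pi.div_apply, Nat.add_sub_cancel, pow_succ _ (m + 1), pow_succ _ m]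
    generalize hN : ((m + 1 : ℕ) : ℝ) = N at *
    generalize Real.cos (2 * π / N) = c
    obtain ⟨x, hxdef⟩ : ∃ x, x = 1 - b / N := ⟨_, rfl⟩
    rw [← hxdef] at hxn ⊢
    have hb : b = N * (1 - x) := by rw [hxdef]; field_simp; ring
    have hx0 : x ≠ 0 := hxn.ne'
    have hA : Real.exp (-b) * (4 * π ^ 2 + 2 * b + b ^ 2 - 2 * b * Real.exp b)
        = Real.exp (-b) * (4 * π ^ 2 + 2 * b + b ^ 2) - 2 * b := by
      linear_combination (-2 * b) * hexp
    rw [hA]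
    generalize Real.exp (-b) = e
    generalize x ^ m = y
    subst hb
    field_simp
    ring
end

section
/- Let b₀ be the unique real root of 4π² + 2b + b² − 2b·e^b, and for each integer n ≥ 3 let F_n(x) = −2cos(2π/n) + 2x + n·x^{n−1} + 2cos(2π/n)(1−n)·x^n − (2−n)·x^{n+1}. Then there exists a constant C > 0 such that for all integers n ≥ 3, |F_n(1 − b₀/n)| ≤ C/n². -/
/-!
Write `h = 1/n`, `x = 1 - b₀ h` and `cos (2π/n) = 1 - ε` with `ε = 2π²h² + O(h⁴)`. Then
`F_n(x) = -2b₀h + 2ε + x^(n-1) · B`, where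
`B = n((1-x)² + 2εx) + 2x(b₀h - ε) = h(4π² + 2b₀ + b₀²) + O(h²)`.
Since `x^(n-1) = exp(-b₀) + O(h)` (`pow_sub_exp_bound`), the coefficient of `h` in `F_n(x)` is
`-2b₀ + exp(-b₀)(4π² + 2b₀ + b₀²)`, which vanishes exactly because `b₀` is a root.
This gives the bound for all large `n`; as `1/n²` does not vanish for `n ≥ 1`, enlarging the
constant takes care of the finitely many remaining `n`.
-/

open Real

/-- Quantitative form of `(1 - b/n)^(n-1) → exp(-b)`, with `n = m + 1`. The power is compared with
`exp(-b/n)^m = exp(-b) · exp(b/n)`; the bases differ by `O(1/n²)`. -/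
lemma pow_sub_exp_bound (b : ℝ) (m : ℕ) (hm : |b| ≤ (m + 1 : ℝ)) :
    |(1 - b / (m + 1 : ℝ)) ^ m - exp (-b)| ≤
      (b ^ 2 * exp |b| + exp (-b) * (2 * |b|)) * (1 / (m + 1 : ℝ)) := by
  have hn : (0 : ℝ) < m + 1 := by positivity
  set n : ℝ := m + 1 with hndef
  set t : ℝ := b / n with ht
  have hbt : b = n * t := by rw [ht]; field_simp
  have habs : |t| = |b| / n := by rw [ht, abs_div, abs_of_pos hn]
  have ht1 : |t| ≤ 1 := by rw [habs, div_le_one hn]; exact hm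
  have hbase : |(1 - t) - exp (-t)| ≤ t ^ 2 := by
    have h := Real.abs_exp_sub_one_sub_id_le (x := -t) (by rwa [abs_neg])
    rw [abs_sub_comm]
    rw [neg_sq] at h
    convert h using 2
    ring
  have hmax : max |1 - t| |exp (-t)| ≤ exp |t| := by
    refine max_le ?_ ?_
    · calc |1 - t| ≤ |t| + 1 := by
            have := abs_sub (1 : ℝ) t
            rw [abs_one] at this; linarith
        _ ≤ exp |t| := Real.add_one_le_exp _
    · rw [abs_of_pos (exp_pos _)]
      exact Real.exp_le_exp.2 (neg_le_abs t)
  have hpow : max |1 - t| |exp (-t)| ^ (m - 1) ≤ exp |b| := by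
    calc max |1 - t| |exp (-t)| ^ (m - 1) ≤ exp |t| ^ (m - 1) := by
          gcongr
      _ = exp ((m - 1 : ℕ) * |t|) := (Real.exp_nat_mul _ _).symm
      _ ≤ exp |b| := by
          apply Real.exp_le_exp.2
          have h1 : ((m - 1 : ℕ) : ℝ) ≤ n := by
            have : ((m - 1 : ℕ) : ℝ) ≤ m := by exact_mod_cast Nat.sub_le m 1
            linarith
          calc ((m - 1 : ℕ) : ℝ) * |t| ≤ n * |t| := by gcongr
            _ = |b| := by rw [habs]; field_simp
  have h1 : |(1 - t) ^ m - exp (-t) ^ m| ≤ b ^ 2 * exp |b| * (1 / n) := by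
    calc |(1 - t) ^ m - exp (-t) ^ m|
        ≤ |(1 - t) - exp (-t)| * m * max |1 - t| |exp (-t)| ^ (m - 1) := abs_pow_sub_pow_le ..
      _ ≤ t ^ 2 * n * exp |b| := by
          gcongr
          linarith
      _ = b ^ 2 * exp |b| * (1 / n) := by rw [ht]; field_simp
  have h2 : |exp (-t) ^ m - exp (-b)| ≤ exp (-b) * (2 * |b|) * (1 / n) := by
    have e : exp (-t) ^ m = exp (-b) * exp t := by
      rw [← Real.exp_nat_mul, ← Real.exp_add]
      congr 1
      rw [hbt, hndef]; ring
    have e2 : exp (-t) ^ m - exp (-b) = exp (-b) * (exp t - 1) := by rw [e]; ring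
    rw [e2, abs_mul, abs_of_pos (exp_pos _)]
    calc exp (-b) * |exp t - 1| ≤ exp (-b) * (2 * |t|) := by
          gcongr
          exact Real.abs_exp_sub_one_le ht1
      _ = _ := by rw [habs]; ring
  calc |(1 - t) ^ m - exp (-b)|
      ≤ |(1 - t) ^ m - exp (-t) ^ m| + |exp (-t) ^ m - exp (-b)| := abs_sub_le _ _ _
    _ ≤ _ := by rw [add_mul]; exact add_le_add h1 h2

/-- The cancellation at order `h`, as a statement about abstract error terms: `E` is the error of
`x^(n-1)` against `e = exp(-b)`, and `d` that of the cosine against its second-order Taylor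
polynomial. -/
lemma main_bound (b e p S h n x ε d E K₁ K₂ : ℝ) (he : 0 ≤ e) (hnh : n * h = 1)
    (h0 : 0 ≤ h) (h1 : h ≤ 1) (hx : x = 1 - b * h) (hx2 : |x| ≤ 2)
    (hp : 0 ≤ p) (hS : S = 2 * p + 2 * b + b ^ 2) (hroot : e * S = 2 * b)
    (hε : ε = p * h ^ 2 + d) (hd : |d| ≤ K₂ * h ^ 4) (hE : |E| ≤ K₁ * h)
    (hK₁ : 0 ≤ K₁) (hK₂ : 0 ≤ K₂) :
    |-2 * (1 - ε) + 2 * x + (e + E) * (n + 2 * (1 - ε) * (1 - n) * x - (2 - n) * x ^ 2)| ≤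
      (2 * (p + K₂) + K₁ * |S| +
        (K₁ + e) * (4 * K₂ + 2 * p * |b| + 2 * b ^ 2 + 4 * (p + K₂))) * h ^ 2 := by
  set R : ℝ := 2 * (n * d) * x - 2 * p * b * h ^ 2 - 2 * b ^ 2 * h ^ 2 - 2 * x * ε with hR
  have hεb : |ε| ≤ (p + K₂) * h ^ 2 := by
    have h42 : h ^ 4 ≤ h ^ 2 := pow_le_pow_of_le_one h0 h1 (by norm_num)
    calc |ε| ≤ |p * h ^ 2| + |d| := by rw [hε]; exact abs_add_le _ _
      _ ≤ p * h ^ 2 + K₂ * h ^ 2 := by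
          rw [abs_of_nonneg (by positivity)]
          have := mul_le_mul_of_nonneg_left h42 hK₂
          linarith
      _ = _ := by ring
  have hn0 : 0 ≤ n := by
    by_contra hneg
    nlinarith
  have hnd : |n * d| ≤ K₂ * h ^ 2 := by
    have h32 : h ^ 3 ≤ h ^ 2 := pow_le_pow_of_le_one h0 h1 (by norm_num)
    calc |n * d| = n * |d| := by rw [abs_mul, abs_of_nonneg hn0]
      _ ≤ n * (K₂ * h ^ 4) := by gcongr
      _ = (n * h) * (K₂ * h ^ 3) := by ring
      _ = K₂ * h ^ 3 := by rw [hnh, one_mul]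
      _ ≤ K₂ * h ^ 2 := by gcongr
  have hRb : |R| ≤ (4 * K₂ + 2 * p * |b| + 2 * b ^ 2 + 4 * (p + K₂)) * h ^ 2 := by
    have a1 : |2 * (n * d) * x| ≤ 4 * K₂ * h ^ 2 := by
      rw [abs_mul, abs_mul, abs_two]
      calc 2 * |n * d| * |x| ≤ 2 * (K₂ * h ^ 2) * 2 := by gcongr
        _ = _ := by ring
    have a2 : |2 * p * b * h ^ 2| = 2 * p * |b| * h ^ 2 := by
      rw [abs_mul, abs_mul, abs_of_nonneg (by positivity : 0 ≤ 2 * p),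
        abs_of_nonneg (by positivity : 0 ≤ h ^ 2)]
    have a3 : |2 * b ^ 2 * h ^ 2| = 2 * b ^ 2 * h ^ 2 := abs_of_nonneg (by positivity)
    have a4 : |2 * x * ε| ≤ 4 * (p + K₂) * h ^ 2 := by
      rw [abs_mul, abs_mul, abs_two]
      calc 2 * |x| * |ε| ≤ 2 * 2 * ((p + K₂) * h ^ 2) := by gcongr
        _ = _ := by ring
    have t1 := abs_sub (2 * (n * d) * x - 2 * p * b * h ^ 2 - 2 * b ^ 2 * h ^ 2) (2 * x * ε)
    have t2 := abs_sub (2 * (n * d) * x - 2 * p * b * h ^ 2) (2 * b ^ 2 * h ^ 2)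
    have t3 := abs_sub (2 * (n * d) * x) (2 * p * b * h ^ 2)
    rw [hR]
    linarith
  have hB : n + 2 * (1 - ε) * (1 - n) * x - (2 - n) * x ^ 2 = h * S + R := by
    have e1 : n + 2 * (1 - ε) * (1 - n) * x - (2 - n) * x ^ 2
        = n * ((1 - x) ^ 2 + 2 * ε * x) + 2 * x * ((1 - x) - ε) := by ring
    have e2 : n * ((1 - x) ^ 2 + 2 * ε * x)
        = (n * h) * (b ^ 2 * h + 2 * p * h * x) + 2 * (n * d) * x := by
      rw [hε, hx]; ring
    rw [e1, e2, hnh, hR, hS, hx]; ring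
  have hsplit : -2 * (1 - ε) + 2 * x + (e + E) * (h * S + R)
      = 2 * ε + E * (h * S) + (E + e) * R := by
    rw [hx]; linear_combination h * hroot
  rw [hB, hsplit]
  have b1 : |2 * ε| ≤ 2 * (p + K₂) * h ^ 2 := by
    rw [abs_mul, abs_two]; linarith
  have b2 : |E * (h * S)| ≤ K₁ * |S| * h ^ 2 := by
    rw [abs_mul, abs_mul, abs_of_nonneg h0]
    calc |E| * (h * |S|) ≤ K₁ * h * (h * |S|) := by gcongr
      _ = _ := by ring
  have b3 : |(E + e) * R| ≤
      (K₁ + e) * ((4 * K₂ + 2 * p * |b| + 2 * b ^ 2 + 4 * (p + K₂)) * h ^ 2) := by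
    rw [abs_mul]
    have : |E + e| ≤ K₁ + e := by
      have t := abs_add_le E e
      rw [abs_of_nonneg he] at t
      have := mul_le_mul_of_nonneg_left h1 hK₁
      linarith
    gcongr
  have t1 := abs_add_le (2 * ε + E * (h * S)) ((E + e) * R)
  have t2 := abs_add_le (2 * ε) (E * (h * S))
  linarith

/-- If `b₀` is the real root of `4π² + 2b + b² − 2b·e^b`, then `F_n(1 − b₀/n) = O(1/n²)`:
there is `C > 0` with `|F_n(1 − b₀/n)| ≤ C/n²` for all `n ≥ 3`. -/
theorem F_at_root_is_O_inv_nsq (b₀ : ℝ)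
    (hroot : 4 * π ^ 2 + 2 * b₀ + b₀ ^ 2 - 2 * b₀ * Real.exp b₀ = 0) :
    ∃ C : ℝ, 0 < C ∧ ∀ n : ℕ, 3 ≤ n → |F n (1 - b₀ / n)| ≤ C / n ^ 2 := by
  have hO : (fun n : ℕ => F n (1 - b₀ / n)) =O[Filter.atTop] (fun n : ℕ => 1 / (n : ℝ) ^ 2) := by
    set e : ℝ := exp (-b₀) with he
    set K₁ : ℝ := b₀ ^ 2 * exp |b₀| + e * (2 * |b₀|) with hK₁
    set K₂ : ℝ := (2 * π) ^ 4 * (5 / 96) with hK₂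
    set p : ℝ := 2 * π ^ 2 with hp
    set S : ℝ := 2 * p + 2 * b₀ + b₀ ^ 2 with hS
    refine Asymptotics.IsBigO.of_bound (2 * (p + K₂) + K₁ * |S| +
        (K₁ + e) * (4 * K₂ + 2 * p * |b₀| + 2 * b₀ ^ 2 + 4 * (p + K₂))) ?_
    -- `|b₀| ≤ n` makes the exponential estimates applicable, `2π ≤ n` the cosine estimate.
    filter_upwards [Filter.eventually_ge_atTop 1, Filter.eventually_ge_atTop ⌈|b₀|⌉₊,
      Filter.eventually_ge_atTop ⌈2 * π⌉₊] with n hn1 hnb hnp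
    obtain ⟨m, rfl⟩ : ∃ m, n = m + 1 := ⟨n - 1, by omega⟩
    have hb : |b₀| ≤ ((m + 1 : ℕ) : ℝ) := Nat.ceil_le.1 hnb
    have hpi : 2 * π ≤ ((m + 1 : ℕ) : ℝ) := Nat.ceil_le.1 hnp
    have hE := pow_sub_exp_bound b₀ m (by exact_mod_cast hb)
    have hcast : ((m : ℝ) + 1) = ((m + 1 : ℕ) : ℝ) := by push_cast; rfl
    rw [hcast] at hE
    have hpos : (0 : ℝ) < ((m + 1 : ℕ) : ℝ) := by positivity
    have hge1 : (1 : ℝ) ≤ ((m + 1 : ℕ) : ℝ) := by exact_mod_cast hn1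
    have hF : ∀ x, F (m + 1) x = -2 * (1 - (1 - cos (2 * π / (m + 1 : ℕ)))) + 2 * x
        + (e + (x ^ m - e)) * (((m + 1 : ℕ) : ℝ)
          + 2 * (1 - (1 - cos (2 * π / (m + 1 : ℕ)))) * (1 - ((m + 1 : ℕ) : ℝ)) * x
          - (2 - ((m + 1 : ℕ) : ℝ)) * x ^ 2) := by
      intro x
      simp only [F, Nat.add_sub_cancel]
      ring
    generalize ((m + 1 : ℕ) : ℝ) = n at *
    have hx2 : |1 - b₀ / n| ≤ 2 := by
      have h1 : |b₀ / n| ≤ 1 := by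
        rw [abs_div, abs_of_pos hpos, div_le_one hpos]; exact hb
      have h2 := abs_sub (1 : ℝ) (b₀ / n)
      rw [abs_one] at h2
      linarith
    have hcos : |(1 - cos (2 * π / n)) - p * (1 / n) ^ 2| ≤ K₂ * (1 / n) ^ 4 := by
      have hpos' : 0 ≤ 2 * π / n := by positivity
      have h := Real.cos_bound (x := 2 * π / n)
        (by rw [abs_of_nonneg hpos', div_le_one hpos]; exact hpi)
      rw [abs_of_nonneg hpos', abs_sub_comm] at h
      calc |(1 - cos (2 * π / n)) - p * (1 / n) ^ 2|
          = |1 - (2 * π / n) ^ 2 / 2 - cos (2 * π / n)| := by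
            congr 1; rw [hp]; ring
        _ ≤ _ := h
        _ = _ := by rw [hK₂]; ring
    have hr : e * S = 2 * b₀ := by
      have hee : e * exp b₀ = 1 := by rw [he, ← Real.exp_add]; simp
      rw [hS, hp]
      linear_combination e * hroot + 2 * b₀ * hee
    have key := main_bound b₀ e p S (1 / n) n (1 - b₀ / n) (1 - cos (2 * π / n))
      ((1 - cos (2 * π / n)) - p * (1 / n) ^ 2) ((1 - b₀ / n) ^ m - e) K₁ K₂
      (exp_pos _).le (by field_simp) (by positivity) (by rw [div_le_one hpos]; exact hge1)
      (by ring) hx2 (by positivity) hS hr (by ring) hcos hE (by positivity) (by positivity)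
    rw [Real.norm_eq_abs, Real.norm_eq_abs, abs_of_nonneg (by positivity : 0 ≤ 1 / n ^ 2), hF]
    rwa [one_div_pow] at key
  obtain ⟨C, hC, hbound⟩ := Asymptotics.bound_of_isBigO_nat_atTop hO
  refine ⟨C, hC, fun n hn => ?_⟩
  have hpos : (0 : ℝ) < n := by exact_mod_cast (by omega : 0 < n)
  have h := hbound (x := n) (by positivity)
  rw [Real.norm_eq_abs, Real.norm_eq_abs, abs_of_nonneg (by positivity : 0 ≤ 1 / (n : ℝ) ^ 2)] at h
  calc |F n (1 - b₀ / n)| ≤ C * (1 / (n : ℝ) ^ 2) := h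
    _ = C / n ^ 2 := by ring
end
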